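/- Let α be a nonzero algebraic number, h the order of the group of roots of unity in the splitting field of its minimal polynomial over ℚ, and ζ a primitive h-th root of unity. Then Tr_{ℚ(α,ζ)/ℚ(α^h,ζ)}(α^n) = 0 for infinitely many n ∈ ℕ if and only if α ∉ ℚ(α^h, ζ). -/

import Mathlib

open IntermediateField

/-!
Let `K` contain a primitive `h`-th root of unity, and let `α ^ h ∈ K`. Then `K(α)/K` is Galois.
If `β ∈ K(α)` satisfies `β ^ h ∈ K` and `β ∉ K`, then some `σ` moves `β`, necessarily to `c * β`
with `c ≠ 1` an `h`-th root of unity in `K`; invariance of the trace under `σ` gives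
`Tr β = c * Tr β`, so `Tr β = 0`. When `α ∉ K` this applies to every `β = α ^ (h * k + 1)`, whereas
for `α ∈ K` the trace of `α ^ n` is `α ^ n ≠ 0`.
-/

theorem finite_torsion_units (K : Type*) [Field K] [NumberField K] :
    Finite (CommGroup.torsion Kˣ) := by
  refine Set.Finite.of_finite_image ?_ (Units.val_injective (α := K)).injOn
  refine (NumberField.Embeddings.finite_of_norm_le K ℂ 1).subset ?_
  rintro _ ⟨u, u_torsion, rfl⟩
  have hu : IsOfFinOrder (u : K) := (Units.coeHom K).isOfFinOrder u_torsion
  have u_pow : (u : K) ^ orderOf (u : K) = 1 := pow_orderOf_eq_one _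
  exact ⟨.of_pow hu.orderOf_pos (u_pow ▸ isIntegral_one),
    fun φ ↦ (φ.toMonoidHom.isOfFinOrder hu).norm_eq_one.le⟩

theorem trace_eq_zero_of_algEquiv_apply_eq_smul {R S : Type*} [CommRing R] [NoZeroDivisors R]
    [CommRing S] [Algebra R S] (σ : S ≃ₐ[R] S) {x : S} {c : R} (hc : c ≠ 1) (hσ : σ x = c • x) :
    Algebra.trace R S x = 0 := by
  have trace_fixed : c * Algebra.trace R S x = Algebra.trace R S x := by
    rw [← smul_eq_mul, ← map_smul, ← hσ, Algebra.trace_eq_of_algEquiv]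
  exact (mul_left_eq_self₀.1 trace_fixed).resolve_left hc

theorem mem_of_pow_mem_of_pow_mul_add_one_mem {E : Type*} [Field E] {F : Subfield E} {x : E}
    {m k : ℕ} (hm : x ^ m ∈ F) (hmk : x ^ (m * k + 1) ∈ F) : x ∈ F := by
  obtain rfl | x_ne_zero := eq_or_ne x 0
  · exact F.zero_mem
  have x_eq : x = x ^ (m * k + 1) / (x ^ m) ^ k := by
    rw [← pow_mul, pow_succ, mul_div_cancel_left₀ _ (pow_ne_zero _ x_ne_zero)]
  exact x_eq ▸ F.div_mem hmk (F.pow_mem hm k)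

section Kummer

open Polynomial

variable {K E : Type*} [Field K] [Field E] [Algebra K E] {h : ℕ} {ζ : K}

theorem exists_apply_eq_smul_of_pow_mem_range [NeZero h] (hζ : IsPrimitiveRoot ζ h)
    {x : E} (hx : x ^ h ∈ Set.range (algebraMap K E)) (σ : E →ₐ[K] E) :
    ∃ c : K, σ x = c • x := by
  obtain rfl | x_ne_zero := eq_or_ne x 0
  · exact ⟨1, by simp⟩
  obtain ⟨a, ha⟩ := hx
  have ratio_pow : (σ x / x) ^ h = 1 := by
    rw [div_pow, ← map_pow, ← ha, σ.commutes, div_self (ha ▸ pow_ne_zero h x_ne_zero)]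
  obtain ⟨i, -, hi⟩ :=
    (hζ.map_of_injective (algebraMap K E).injective).eq_pow_of_pow_eq_one ratio_pow
  exact ⟨ζ ^ i, by rw [Algebra.smul_def, map_pow, hi, div_mul_cancel₀ _ x_ne_zero]⟩

theorem trace_eq_zero_of_pow_mem_range [IsGalois K E] [NeZero h] (hζ : IsPrimitiveRoot ζ h)
    {x : E} (hx : x ^ h ∈ Set.range (algebraMap K E)) (hxK : x ∉ Set.range (algebraMap K E)) :
    Algebra.trace K E x = 0 := by
  obtain ⟨σ, hσ⟩ : ∃ σ : E ≃ₐ[K] E, σ x ≠ x := by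
    simpa only [InfiniteGalois.mem_range_algebraMap_iff_fixed, not_forall] using hxK
  obtain ⟨c, hc⟩ : ∃ c : K, σ x = c • x :=
    exists_apply_eq_smul_of_pow_mem_range hζ hx σ
  refine trace_eq_zero_of_algEquiv_apply_eq_smul σ ?_ hc
  rintro rfl
  exact hσ (by rw [hc, one_smul])

theorem isSplittingField_X_pow_sub_C_adjoin_simple [NeZero h] (hζ : IsPrimitiveRoot ζ h)
    {α : E} {a : K} (ha : α ^ h = algebraMap K E a) : (X ^ h - C a).IsSplittingField K K⟮α⟯ := by
  have splits_E : ((X ^ h - C a).map (algebraMap K E)).Splits := by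
    simpa using X_pow_sub_C_splits_of_isPrimitiveRoot
      (hζ.map_of_injective (algebraMap K E).injective) ha
  have splits_adjoin : ((X ^ h - C a).map (algebraMap K K⟮α⟯)).Splits := by
    simpa using X_pow_sub_C_splits_of_isPrimitiveRoot
      (hζ.map_of_injective (algebraMap K K⟮α⟯).injective)
      (show AdjoinSimple.gen K α ^ h = algebraMap K K⟮α⟯ a from Subtype.ext ha)
  have α_mem_rootSet : α ∈ (X ^ h - C a).rootSet E :=
    mem_rootSet.2 ⟨X_pow_sub_C_ne_zero (NeZero.pos h) a, by simp [ha]⟩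
  refine isSplittingField_iff.2 ⟨splits_adjoin, le_antisymm ?_ ?_⟩
  · exact adjoin_simple_le_iff.2 (subset_adjoin K _ α_mem_rootSet)
  · exact adjoin_le_iff.2 ((splits_iff_mem splits_E).1 splits_adjoin)

theorem isGalois_adjoin_simple_of_pow_mem_range [NeZero h] (hζ : IsPrimitiveRoot ζ h)
    {α : E} (hα : α ≠ 0) (hαh : α ^ h ∈ Set.range (algebraMap K E)) : IsGalois K K⟮α⟯ := by
  obtain ⟨a, ha⟩ := hαh
  have a_ne_zero : a ≠ 0 := by
    rintro rfl
    exact pow_ne_zero h hα (by rw [← ha, map_zero])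
  have := isSplittingField_X_pow_sub_C_adjoin_simple hζ ha.symm
  exact .of_separable_splitting_field (separable_X_pow_sub_C a hζ.neZero'.ne a_ne_zero)

theorem trace_gen_pow_ne_zero_of_mem_range {α : E} (hα : α ≠ 0)
    (hαK : α ∈ Set.range (algebraMap K E)) (n : ℕ) :
    Algebra.trace K K⟮α⟯ (AdjoinSimple.gen K α ^ n) ≠ 0 := by
  obtain ⟨a, rfl⟩ := hαK
  have gen_eq : AdjoinSimple.gen K (algebraMap K E a) = algebraMap K K⟮algebraMap K E a⟯ a :=
    Subtype.ext rfl
  have finrank_eq : Module.finrank K K⟮algebraMap K E a⟯ = 1 :=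
    finrank_adjoin_simple_eq_one_iff.2 (IntermediateField.algebraMap_mem ⊥ a)
  rw [gen_eq, ← map_pow, Algebra.trace_algebraMap, finrank_eq, one_smul]
  exact pow_ne_zero n fun ha ↦ hα (by rw [ha, map_zero])

theorem zero_trace_infinitely_often_general [NeZero h] (hζ : IsPrimitiveRoot ζ h)
    {α : E} (hα : α ≠ 0) (hαh : α ^ h ∈ Set.range (algebraMap K E)) :
    {n : ℕ | Algebra.trace K K⟮α⟯ (AdjoinSimple.gen K α ^ n) = 0}.Infinite ↔
      α ∉ Set.range (algebraMap K E) := by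
  refine ⟨fun infinite hαK ↦ ?_, fun hαK ↦ ?_⟩
  · obtain ⟨n, hn⟩ := infinite.nonempty
    exact trace_gen_pow_ne_zero_of_mem_range hα hαK n hn
  have : IsGalois K K⟮α⟯ := isGalois_adjoin_simple_of_pow_mem_range hζ hα hαh
  have index_injective : Function.Injective fun k ↦ h * k + 1 := fun k l hkl ↦
    Nat.eq_of_mul_eq_mul_left (NeZero.pos h) (Nat.succ_injective hkl)
  refine Set.infinite_of_injective_forall_mem index_injective fun k ↦
    trace_eq_zero_of_pow_mem_range hζ ?_ ?_
  · obtain ⟨a, ha⟩ := hαh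
    refine ⟨a ^ (h * k + 1), Subtype.ext ?_⟩
    change algebraMap K E _ = (α ^ (h * k + 1)) ^ h
    rw [map_pow, ha, pow_right_comm]
  · rintro ⟨b, hb⟩
    exact hαK (mem_of_pow_mem_of_pow_mul_add_one_mem (F := (algebraMap K E).fieldRange) hαh
      ⟨b, congrArg Subtype.val hb⟩)

end Kummer

/-- Theorem 6 (int3): for a nonzero algebraic `α`, with `h` the order of the group of roots
of unity of the splitting field of its minimal polynomial and `ζ` a primitive `h`-th root of
unity, `Tr_{ℚ(α,ζ)/ℚ(α^h,ζ)}(αⁿ) = 0` for infinitely many `n` iff `α ∉ ℚ(α^h, ζ)`. -/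
theorem zero_trace_infinitely_often (α : ℂ) (hα : α ≠ 0) (halg : IsAlgebraic ℚ α)
    (h : ℕ)
    (hh : h = Nat.card (CommGroup.torsion ((minpoly ℚ α).SplittingFieldˣ)))
    (ζ : ℂ) (hζ : IsPrimitiveRoot ζ h)
    (L : IntermediateField ℚ ℂ) (hL : L = IntermediateField.adjoin ℚ {α ^ h, ζ}) :
    {n : ℕ | Algebra.trace L (IntermediateField.adjoin L {α})
        ((IntermediateField.AdjoinSimple.gen L α) ^ n) = 0}.Infinite
      ↔ α ∉ L := by
  have : NeZero h := by
    have : NumberField (minpoly ℚ α).SplittingField := ⟨⟩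
    have := finite_torsion_units (minpoly ℚ α).SplittingField
    exact ⟨hh ▸ Nat.card_pos.ne'⟩
  have ζ_mem : ζ ∈ L := hL ▸ subset_adjoin ℚ _ (by simp)
  have pow_mem : α ^ h ∈ L := hL ▸ subset_adjoin ℚ _ (by simp)
  have hζL : IsPrimitiveRoot (⟨ζ, ζ_mem⟩ : L) h :=
    .of_map_of_injective (f := algebraMap L ℂ) hζ (algebraMap L ℂ).injective
  rw [zero_trace_infinitely_often_general hζL hα ⟨⟨α ^ h, pow_mem⟩, rfl⟩]
  exact not_congr (Set.ext_iff.1 Subtype.range_coe α)
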